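/- For all a, b ∈ F^*, I(a,b) = I(−b,−a). -/

import Mathlib

/-!
The functional equation comes from integrating out `z` and from the symmetry `x ↔ y` of what is
left. For fixed `x, y, s` and `val t = j` the variable `z` enters the support condition only through
one coset of `𝔭^{-j}`, and it enters the phase linearly, with coefficient `-2ρ(xb + yρa)`. By
orthogonality of characters, and since `2` is a unit, the `z`-integral (`Good.integral_layer`) is
supported on `xb + yρa ∈ 𝔭^j`; there it leaves the phase
`x + y + 2(bx - ay)xy - 2(b²x² - abxy + a²y²)s`, subject to
`xb + yρa, xb + yρ²a ∈ 𝔭^j` and `x + as, bs - y ∈ 𝔭^{-j}`. All this is invariant under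
`(a, b, x, y) ↦ (-b, -a, y, x)` (`reduced_symm`).

The interchanges of integrals need care, because the measures are only known through their values
and invariance: nothing says that balls or shells are measurable. Three dichotomies deal with this.
If the unit shell is not null-measurable for the multiplicative measure, every `t`-integral that
occurs is `0`; otherwise it is the sum over `val t` (`integral_val`). If no bounded set of positive
additive measure is null-measurable, every boundedly supported function has integral `0`, so both
sides vanish (`Iab_eq_zero`). In the remaining case, `Good`, counting disjoint translates shows that
the residue field has exactly `q` elements and that balls are null-measurable. A function that is
boundedly supported and invariant under a ball then has a finite sum as its integral, so that
Fubini's theorem becomes an exchange of finite sums.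
-/
open MeasureTheory
open Classical

noncomputable section

/-- The ambient setting: a nonarchimedean local field `F` whose residue field has
cardinality `q` and characteristic `p > 3`, containing a primitive cube root of
unity `ρ`, with normalized valuation `val`, uniformizer `ϖ`, an additive character
`ψ` which is trivial on the ring of integers `O` and nontrivial on `𝔭⁻¹`, an
additive Haar measure `μ` normalized by `μ(O) = 1` (so `μ(𝔭^j) = q^{-j}`), and a
multiplicative Haar measure `μs` on `F^*` normalized by `μs(O^*) = 1`. -/
structure CubicSetup (F : Type*) [Field F] [MeasurableSpace F] where
  q : ℕ
  val : F → ℤ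
  ϖ : F
  ρ : F
  ψ : F → ℂ
  μ : Measure F
  μs : Measure F
  residue_char : ∃ p f : ℕ, p.Prime ∧ 3 < p ∧ 0 < f ∧ q = p ^ f
  val_mul : ∀ x y : F, x ≠ 0 → y ≠ 0 → val (x * y) = val x + val y
  val_add : ∀ x y : F, x ≠ 0 → y ≠ 0 → x + y ≠ 0 → min (val x) (val y) ≤ val (x + y)
  uniformizer_ne_zero : ϖ ≠ 0
  val_uniformizer : val ϖ = 1
  val_surjective : ∀ n : ℤ, ∃ x : F, x ≠ 0 ∧ val x = n
  rho_prim_cubic : ρ ^ 2 + ρ + 1 = 0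
  psi_add : ∀ x y : F, ψ (x + y) = ψ x * ψ y
  psi_trivial_on_O : ∀ x : F, x ≠ 0 → 0 ≤ val x → ψ x = 1
  psi_zero : ψ 0 = 1
  psi_nontrivial : ∃ x : F, x ≠ 0 ∧ -1 ≤ val x ∧ ψ x ≠ 1
  mu_add_invariant : ∀ (a : F) (s : Set F), μ ((a + ·) ⁻¹' s) = μ s
  mu_ball : ∀ j : ℤ, μ {x : F | x = 0 ∨ j ≤ val x} = ENNReal.ofReal ((q : ℝ) ^ (-j))
  mus_mul_invariant : ∀ a : F, a ≠ 0 → ∀ s : Set F, μs ((a * ·) ⁻¹' s) = μs s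
  mus_units : μs {x : F | x ≠ 0 ∧ val x = 0} = 1
  mus_zero : μs {0} = 0

namespace CubicSetup

variable {F : Type*} [Field F] [MeasurableSpace F] (S : CubicSetup F)

/-- The normalized absolute value `|x| = q^{-val x}` (with `|0| = 0`). -/
def A (x : F) : ℝ := if x = 0 then 0 else (S.q : ℝ) ^ (-S.val x)

/-- Membership in the ring of integers `O`. -/
def inO (x : F) : Prop := x = 0 ∨ 0 ≤ S.val x

/-- The fractional ideal `𝔭^j = {x : val x ≥ j}`. -/
def pid (j : ℤ) : Set F := {x : F | x = 0 ∨ j ≤ S.val x}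

/-- The cubic exponential integral `C(a,b) = ∫_O ψ(ax + bx³) dx`. -/
def Cint (a b : F) : ℂ := ∫ x in S.pid 0, S.ψ (a * x + b * x ^ 3) ∂S.μ

/-- The cubic exponential integral `C_ℓ(a,b) = ∫_{val x = ℓ} ψ(ax + bx³) dx`. -/
def Cl (ℓ : ℤ) (a b : F) : ℂ :=
  ∫ x in {u : F | u ≠ 0 ∧ S.val u = ℓ}, S.ψ (a * x + b * x ^ 3) ∂S.μ

/-- The cubic exponential integral `C₀(a,b) = ∫_{O^*} ψ(au + bu³) du`. -/
def C0 (a b : F) : ℂ :=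
  ∫ u in {x : F | x ≠ 0 ∧ S.val x = 0}, S.ψ (a * u + b * u ^ 3) ∂S.μ

/-- The Kloosterman integral `K(a,b) = ∫_{O^*} ψ(au + bu⁻¹) du`. -/
def Kl (a b : F) : ℂ :=
  ∫ u in {x : F | x ≠ 0 ∧ S.val x = 0}, S.ψ (a * u + b * u⁻¹) ∂S.μ

/-- `Z` is a complete set of representatives for `𝔭^L` modulo `𝔭^ℓ`. -/
def IsReps (L ℓ : ℤ) (Z : Finset F) : Prop :=
  (∀ z ∈ Z, z ∈ S.pid L) ∧ ∀ x ∈ S.pid L, ∃! z, z ∈ Z ∧ x - z ∈ S.pid ℓ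

/-- `R` is a complete set of representatives of `O^*` for the units of the
residue field `(O/𝔭)^*`. -/
def IsUnitReps (R : Finset F) : Prop :=
  (∀ r ∈ R, r ≠ 0 ∧ S.val r = 0) ∧
    ∀ x : F, x ≠ 0 → S.val x = 0 → ∃! r, r ∈ R ∧ x - r ∈ S.pid 1

/-- The big cell orbital integral `I(a,b)`: the integral over `(x,y,z,s) ∈ F⁴`,
`t ∈ F^*` of the characteristic function of `O^8` evaluated at
`(0, t, t⁻¹a, t(x+as), t⁻¹b, t(bs−y), t⁻¹(xb+yρ²a), t[(xb+yρ²a)s−(xy+zρ)])`,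
times `|t|² ψ[x + y + 2a(xy−z)yρ² − 2bxzρ]`, w.r.t. `d*t ds dx dy dz`. -/
def Iab (a b : F) : ℂ :=
  ∫ z, (∫ y, (∫ x, (∫ s, (∫ t,
    (if S.inO (0 : F) ∧ S.inO t ∧ S.inO (t⁻¹ * a) ∧ S.inO (t * (x + a * s)) ∧
        S.inO (t⁻¹ * b) ∧ S.inO (t * (b * s - y)) ∧
        S.inO (t⁻¹ * (x * b + y * S.ρ ^ 2 * a)) ∧
        S.inO (t * ((x * b + y * S.ρ ^ 2 * a) * s - (x * y + z * S.ρ)))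
      then ((S.A t : ℂ) ^ 2) *
          S.ψ (x + y + 2 * a * (x * y - z) * y * S.ρ ^ 2 - 2 * b * x * z * S.ρ)
      else 0) ∂S.μs) ∂S.μ) ∂S.μ) ∂S.μ) ∂S.μ

/-- The integral `I(j; a, b)`. -/
def Ij (j : ℤ) (a b : F) : ℂ :=
  (S.q : ℂ) ^ (-(2 * j)) *
    ∫ z, (∫ y, (∫ x, (∫ s,
      (if x + a * s ∈ S.pid (-j) ∧ y - b * s ∈ S.pid (-j) ∧
          (x * b + y * S.ρ ^ 2 * a) * s - (x * y + z * S.ρ) ∈ S.pid (-j) ∧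
          x * b + y * S.ρ ^ 2 * a ∈ S.pid j
        then S.ψ (x + y + 2 * a * S.ρ ^ 2 * x * y ^ 2 -
            (2 * S.ρ * b * x + 2 * S.ρ ^ 2 * a * y) * z)
        else 0) ∂S.μ) ∂S.μ) ∂S.μ) ∂S.μ

/-- The domain `D_j(a,b) = {(x,y) : bx − ρay ∈ a𝔭^{-j}, bx ∈ 𝔭^j, ay ∈ 𝔭^j,
y(bx+ay) ∈ 𝔭^j}`. -/
def Dset (j : ℤ) (a b : F) : Set (F × F) :=
  {p : F × F | a⁻¹ * (b * p.1 - S.ρ * a * p.2) ∈ S.pid (-j) ∧ b * p.1 ∈ S.pid j ∧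
    a * p.2 ∈ S.pid j ∧ p.2 * (b * p.1 + a * p.2) ∈ S.pid j}

/-- The common integrand `ψ[(1 − ρa⁻¹b)x − (1+2ρ)y + 2a⁻¹b²x³]`. -/
def integrand (a b x y : F) : ℂ :=
  S.ψ ((1 - S.ρ * a⁻¹ * b) * x - (1 + 2 * S.ρ) * y + 2 * a⁻¹ * b ^ 2 * x ^ 3)

/-- `I₁^{(j)}(a,b)`: the part of the integral with `y ∈ 𝔭^{-m}`, where
`m = min(j, val(a)−j, ⌊(val(a)−j)/2⌋)`. -/
def I1j (j : ℤ) (a b : F) : ℂ :=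
  ((S.A a : ℂ))⁻¹ * ∫ y, (∫ x,
    (if (x, y) ∈ S.Dset j a b ∧
        y ∈ S.pid (-(min j (min (S.val a - j) ((S.val a - j) / 2))))
      then S.integrand a b x y else 0) ∂S.μ) ∂S.μ

/-- `I₂^{(j)}(a,b)`: the part of the integral with `y ∉ 𝔭^{-j}`. -/
def I2j (j : ℤ) (a b : F) : ℂ :=
  ((S.A a : ℂ))⁻¹ * ∫ y, (∫ x,
    (if (x, y) ∈ S.Dset j a b ∧ y ∉ S.pid (-j)
      then S.integrand a b x y else 0) ∂S.μ) ∂S.μ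

/-- `I₃^{(j)}(a,b)`: the part of the integral with `y ∈ 𝔭^{-j}` and `ay² ∉ 𝔭^j`. -/
def I3j (j : ℤ) (a b : F) : ℂ :=
  ((S.A a : ℂ))⁻¹ * ∫ y, (∫ x,
    (if (x, y) ∈ S.Dset j a b ∧ y ∈ S.pid (-j) ∧ a * y ^ 2 ∉ S.pid j
      then S.integrand a b x y else 0) ∂S.μ) ∂S.μ

/-- `G_j^ℓ(a,b) = ∫∫_{Γ_j} ψ(ϖ^ℓ b⁻¹ x − 27⁻¹ ϖ^{3ℓ} a⁻¹b⁻¹ x³ + ϖ^ℓ a⁻¹ y) dx dy`. -/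
def Gint (j ℓ : ℤ) (a b : F) : ℂ :=
  ∫ y, (∫ x,
    (if S.inO x ∧ S.inO y ∧ a⁻¹ * (x ^ 3 - y ^ 3) ∈ S.pid (-j)
      then S.ψ (S.ϖ ^ ℓ * b⁻¹ * x - (27 : F)⁻¹ * S.ϖ ^ (3 * ℓ) * a⁻¹ * b⁻¹ * x ^ 3 +
          S.ϖ ^ ℓ * a⁻¹ * y)
      else 0) ∂S.μ) ∂S.μ

/-- `Γ_j = {(x,y) ∈ O × O : x³ − y³ ∈ a𝔭^{-j}}`. -/
def Gamma (a : F) (j : ℤ) : Set (F × F) :=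
  {p : F × F | S.inO p.1 ∧ S.inO p.2 ∧ a⁻¹ * (p.1 ^ 3 - p.2 ^ 3) ∈ S.pid (-j)}

/-- `𝔭^{⌈m/3⌉} × 𝔭^{⌈m/3⌉}`. -/
def Ball (m : ℤ) : Set (F × F) := S.pid (-((-m) / 3)) ×ˢ S.pid (-((-m) / 3))

/-- `{(x,y) : |x| = q^{-n}, y ∈ ρ^k x + 𝔭^{m−2n}}`. -/
def Ann (m n : ℤ) (k : ℕ) : Set (F × F) :=
  {p : F × F | p.1 ≠ 0 ∧ S.val p.1 = n ∧ p.2 - S.ρ ^ k * p.1 ∈ S.pid (m - 2 * n)}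

/-- The degenerate orbital integral `I₁(a)`, integrated w.r.t. `dx dy dz d*t`. -/
def Ione (a : F) : ℂ :=
  ∫ t, (∫ z, (∫ y, (∫ x,
    (if S.inO t ∧ S.inO (t * (a + x)) ∧ S.inO (a ^ (-2 : ℤ) * t⁻¹) ∧ S.inO (t * y) ∧
        S.inO (a ^ (-2 : ℤ) * t⁻¹ * x) ∧
        S.inO (t * (S.ρ * a * y - S.ρ ^ 2 * x * y - z))
      then ((S.A t : ℂ) ^ 2) *
          S.ψ (-(S.ρ * a⁻¹ * x * y) - S.ρ ^ 2 * a⁻¹ * z + a ^ (-2 : ℤ) * x * z + x + y)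
      else 0) ∂S.μ) ∂S.μ) ∂S.μ) ∂S.μs

/-- The degenerate orbital integral `I₂(a)`, integrated w.r.t. `dx dy dz d*t`. -/
def Itwo (a : F) : ℂ :=
  ∫ t, (∫ z, (∫ y, (∫ x,
    (if S.inO t ∧ S.inO (a ^ (-2 : ℤ) * t⁻¹) ∧ S.inO (t * x) ∧ S.inO (t * (a - y)) ∧
        S.inO (a ^ (-2 : ℤ) * t⁻¹ * y) ∧ S.inO (t * (x * a - x * y - z * S.ρ))
      then ((S.A t : ℂ) ^ 2) *
          S.ψ (a ^ (-2 : ℤ) * (x * y - z) * y - S.ρ * (x * y * S.ρ ^ 2 + z) * a⁻¹ + x + y)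
      else 0) ∂S.μ) ∂S.μ) ∂S.μ) ∂S.μs


/-! ### Arithmetic of the fractional ideals -/

lemma val_one : S.val 1 = 0 := by
  have := S.val_mul 1 1 one_ne_zero one_ne_zero
  simp at this; exact this

lemma val_neg_one : S.val (-1) = 0 := by
  have := S.val_mul (-1) (-1) (by simp) (by simp)
  simp [val_one] at this; omega

lemma val_neg (x : F) : S.val (-x) = S.val x := by
  by_cases hx : x = 0
  · simp [hx]
  · have := S.val_mul (-1) x (by simp) hx
    simpa [val_neg_one] using this

lemma val_inv {x : F} (hx : x ≠ 0) : S.val x⁻¹ = -S.val x := by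
  have := S.val_mul x x⁻¹ hx (inv_ne_zero hx)
  rw [mul_inv_cancel₀ hx, val_one] at this; omega

lemma pid_zero (n : ℤ) : (0 : F) ∈ S.pid n := Or.inl rfl

lemma mem_pid_iff {x : F} (hx : x ≠ 0) {n : ℤ} : x ∈ S.pid n ↔ n ≤ S.val x := by
  simp [pid, hx]

lemma pid_mono {m n : ℤ} (h : m ≤ n) {x : F} (hx : x ∈ S.pid n) : x ∈ S.pid m := by
  rcases hx with hx | hx
  · exact Or.inl hx
  · exact Or.inr (h.trans hx)

lemma pid_add {n : ℤ} {x y : F} (hx : x ∈ S.pid n) (hy : y ∈ S.pid n) : x + y ∈ S.pid n := by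
  by_cases h0 : x = 0
  · simpa [h0] using hy
  by_cases h1 : y = 0
  · simpa [h1] using hx
  by_cases h2 : x + y = 0
  · exact Or.inl h2
  rw [mem_pid_iff S h0] at hx
  rw [mem_pid_iff S h1] at hy
  exact Or.inr ((le_min hx hy).trans (S.val_add x y h0 h1 h2))

lemma pid_neg {n : ℤ} {x : F} (hx : x ∈ S.pid n) : -x ∈ S.pid n := by
  rcases hx with hx | hx
  · exact Or.inl (by simp [hx])
  · exact Or.inr (by rwa [val_neg])

lemma pid_neg_iff {n : ℤ} {x : F} : -x ∈ S.pid n ↔ x ∈ S.pid n :=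
  ⟨fun h => by simpa using pid_neg S h, pid_neg S⟩

lemma pid_sub {n : ℤ} {x y : F} (hx : x ∈ S.pid n) (hy : y ∈ S.pid n) : x - y ∈ S.pid n := by
  rw [sub_eq_add_neg]; exact pid_add S hx (pid_neg S hy)

lemma pid_mul {m n : ℤ} {x y : F} (hx : x ∈ S.pid m) (hy : y ∈ S.pid n) :
    x * y ∈ S.pid (m + n) := by
  by_cases h0 : x = 0
  · exact Or.inl (by simp [h0])
  by_cases h1 : y = 0
  · exact Or.inl (by simp [h1])
  rw [mem_pid_iff S h0] at hx
  rw [mem_pid_iff S h1] at hy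
  exact Or.inr (by rw [S.val_mul x y h0 h1]; omega)

lemma pid_mul' {m n k : ℤ} (hk : k ≤ m + n) {x y : F} (hx : x ∈ S.pid m) (hy : y ∈ S.pid n) :
    x * y ∈ S.pid k := pid_mono S hk (pid_mul S hx hy)

lemma mul_mem_pid_iff {c : F} (hc : c ≠ 0) {x : F} {n : ℤ} :
    c * x ∈ S.pid n ↔ x ∈ S.pid (n - S.val c) := by
  by_cases h : x = 0
  · simp [h, pid_zero]
  · rw [mem_pid_iff S h, mem_pid_iff S (mul_ne_zero hc h), S.val_mul c x hc h]
    constructor <;> intro h <;> omega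

lemma exists_mem_pid (x : F) : ∃ N : ℤ, x ∈ S.pid N := ⟨S.val x, Or.inr le_rfl⟩

lemma pid_sub_comm {n : ℤ} {x y : F} (h : x - y ∈ S.pid n) : y - x ∈ S.pid n := by
  simpa using pid_neg S h

lemma pid_add_iff {n : ℤ} {x h : F} (hh : h ∈ S.pid n) : x + h ∈ S.pid n ↔ x ∈ S.pid n :=
  ⟨fun k => by simpa using pid_sub S k hh, fun k => pid_add S k hh⟩

lemma one_mem : (1 : F) ∈ S.pid 0 := Or.inr (by rw [val_one])

lemma one_not_mem : (1 : F) ∉ S.pid 1 := by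
  rw [mem_pid_iff S one_ne_zero, val_one]; omega

lemma nat_mem (n : ℕ) : (n : F) ∈ S.pid 0 := by
  induction n with
  | zero => simpa using pid_zero S 0
  | succ n ih => push_cast; exact pid_add S ih (one_mem S)

lemma two_mem : (2 : F) ∈ S.pid 0 := by exact_mod_cast nat_mem S 2

lemma rho_cube : S.ρ ^ 3 = 1 := by linear_combination (S.ρ - 1) * S.rho_prim_cubic

lemma rho_ne : S.ρ ≠ 0 := by
  intro h; have := rho_cube S; simp [h] at this

lemma val_rho : S.val S.ρ = 0 := by
  have h := rho_cube S
  have h0 := rho_ne S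
  have h1 := S.val_mul (S.ρ * S.ρ) S.ρ (mul_ne_zero h0 h0) h0
  rw [S.val_mul _ _ h0 h0, show S.ρ * S.ρ * S.ρ = 1 by rw [← h]; ring, val_one] at h1
  omega

lemma rho_mem : S.ρ ∈ S.pid 0 := Or.inr (by rw [val_rho])

lemma rho_mul_mem_iff {x : F} {n : ℤ} : S.ρ * x ∈ S.pid n ↔ x ∈ S.pid n := by
  rw [mul_mem_pid_iff S (rho_ne S), val_rho, sub_zero]

lemma rho_sq_mul_mem_iff {x : F} {n : ℤ} : S.ρ ^ 2 * x ∈ S.pid n ↔ x ∈ S.pid n := by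
  rw [pow_two, mul_assoc, rho_mul_mem_iff, rho_mul_mem_iff]

lemma psi_O {x : F} (hx : x ∈ S.pid 0) : S.ψ x = 1 := by
  by_cases h : x = 0
  · rw [h, S.psi_zero]
  · exact S.psi_trivial_on_O x h ((mem_pid_iff S h).1 hx)

lemma psi_add_O {x h : F} (hh : h ∈ S.pid 0) : S.ψ (x + h) = S.ψ x := by
  rw [S.psi_add, psi_O S hh, mul_one]

lemma q_gt : 3 < S.q := by
  obtain ⟨p, f, _, h3, hf, hq⟩ := S.residue_char
  rw [hq]; exact h3.trans_le (Nat.le_self_pow hf.ne' p)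

lemma q_pos : (0 : ℝ) < S.q := by exact_mod_cast (by have := q_gt S; omega : 0 < S.q)

/-! ### Measures whose outer measure is invariant under a bijection -/

/-- Null-measurability of a set of finite measure is a property of the outer measure alone
(Carathéodory), so it is preserved by any bijection that preserves the outer measure. -/
lemma nullMeasurable_preimage {α : Type*} [MeasurableSpace α] {μ : Measure α} {e : α → α}
    (he : Function.Bijective e) (hμ : ∀ s, μ (e ⁻¹' s) = μ s) {A : Set α}
    (hA : NullMeasurableSet A μ) (hfin : μ A ≠ ⊤) : NullMeasurableSet (e ⁻¹' A) μ := by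
  set B := e ⁻¹' A with hB
  set H := toMeasurable μ B
  have hBH : B ⊆ H := subset_toMeasurable μ B
  have hH : μ H = μ B := measure_toMeasurable B
  have hBf : μ B ≠ ⊤ := by rw [hB, hμ]; exact hfin
  -- the Carathéodory condition for `A` against the image of `H`, pulled back along `e`
  have key : μ (H ∩ B) + μ (H \ B) = μ H := by
    have h := measure_inter_add_sdiff₀ (e '' H) hA
    rw [← hμ (e '' H ∩ A), ← hμ (e '' H \ A), ← hμ (e '' H), Set.preimage_inter,
      Set.preimage_sdiff, Set.preimage_image_eq _ he.injective] at h
    exact h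
  rw [Set.inter_eq_self_of_subset_right hBH, hH] at key
  have h0 : μ (H \ B) = 0 := by
    have : μ B + μ (H \ B) = μ B + 0 := by rw [key, add_zero]
    exact (ENNReal.add_right_inj hBf).1 this
  exact (measurableSet_toMeasurable μ B).nullMeasurableSet.congr
    ((ae_le_set.2 h0).antisymm (LE.le.eventuallyLE hBH))

lemma nullMeasurable_translate {A : Set F} (hA : NullMeasurableSet A S.μ) (hfin : S.μ A ≠ ⊤)
    (r : F) : NullMeasurableSet {x | x - r ∈ A} S.μ := by
  have := nullMeasurable_preimage (e := fun x => -r + x) (AddGroup.addLeft_bijective (-r))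
    (S.mu_add_invariant (-r)) hA hfin
  convert this using 1
  ext x; simp [neg_add_eq_sub]

lemma mu_translate (A : Set F) (r : F) : S.μ {x | x - r ∈ A} = S.μ A := by
  rw [← S.mu_add_invariant (-r) A]
  congr 1; ext x; simp [neg_add_eq_sub]

/-- The coset `r + 𝔭^n` has the measure of `𝔭^n`. -/
lemma mu_ball' (r : F) (n : ℤ) :
    S.μ {x | x - r ∈ S.pid n} = ENNReal.ofReal ((S.q : ℝ) ^ (-n)) := by
  rw [mu_translate]; exact S.mu_ball n

/-! ### Coset representatives and measurability of balls -/

/-- The elements of `Z` lie in `𝔭^L` and are pairwise distinct modulo `𝔭^ℓ`. -/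
def Sep (L ℓ : ℤ) (Z : Finset F) : Prop :=
  (∀ z ∈ Z, z ∈ S.pid L) ∧ ∀ z ∈ Z, ∀ w ∈ Z, z - w ∈ S.pid ℓ → z = w

/-- The elements of `Z` meet every coset of `𝔭^ℓ` in `𝔭^L`. -/
def Cov (L ℓ : ℤ) (Z : Finset F) : Prop := ∀ x ∈ S.pid L, ∃ z ∈ Z, x - z ∈ S.pid ℓ

lemma exists_val (n : ℤ) : ∃ c : F, c ≠ 0 ∧ S.val c = n := S.val_surjective n

/-- Powers of a separated set modulo `𝔭` give separated sets in all ranges of ideals. -/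
lemma sep_pow {Z : Finset F} (hZ : S.Sep 0 1 Z) (L : ℤ) (M : ℕ) :
    ∃ W : Finset F, S.Sep L (L + M) W ∧ W.card = Z.card ^ M ∧
      (S.Cov 0 1 Z → S.Cov L (L + M) W) := by
  induction M with
  | zero =>
    refine ⟨{0}, ⟨?_, ?_⟩, by simp, ?_⟩
    · simp [pid_zero]
    · simp
    · intro _ x hx; exact ⟨0, by simp, by simpa using hx⟩
  | succ M ih =>
    obtain ⟨W, ⟨hW1, hW2⟩, hWc, hWcov⟩ := ih
    obtain ⟨c, hc, hcv⟩ := exists_val S (L + M)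
    have hcz : ∀ z ∈ Z, c * z ∈ S.pid (L + M) := fun z hz => by
      rw [mul_mem_pid_iff S hc, hcv]; simpa using hZ.1 z hz
    have hsep : ∀ w ∈ W, ∀ z ∈ Z, ∀ w' ∈ W, ∀ z' ∈ Z,
        (w + c * z) - (w' + c * z') ∈ S.pid (L + M + 1) → w = w' ∧ z = z' := by
      intro w hw z hz w' hw' z' hz' h
      have h1 : w - w' ∈ S.pid (L + M) := by
        have := pid_sub S (pid_mono S (by omega : L + M ≤ L + M + 1) h)
          (pid_sub S (hcz z hz) (hcz z' hz'))
        convert this using 1; ring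
      have e := hW2 w hw w' hw' h1
      refine ⟨e, hZ.2 z hz z' hz' ?_⟩
      have h2 : c * (z - z') ∈ S.pid (L + M + 1) := by
        convert h using 1; rw [e]; ring
      rwa [mul_mem_pid_iff S hc, hcv, add_sub_cancel_left] at h2
    refine ⟨(W ×ˢ Z).image (fun p => p.1 + c * p.2), ⟨?_, ?_⟩, ?_, ?_⟩
    · intro x hx
      simp only [Finset.mem_image, Finset.mem_product] at hx
      obtain ⟨⟨w, z⟩, ⟨hw, hz⟩, rfl⟩ := hx
      exact pid_add S (hW1 w hw) (pid_mono S (by omega) (hcz z hz))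
    · intro x hx y hy h
      simp only [Finset.mem_image, Finset.mem_product] at hx hy
      obtain ⟨⟨w, z⟩, ⟨hw, hz⟩, rfl⟩ := hx
      obtain ⟨⟨w', z'⟩, ⟨hw', hz'⟩, rfl⟩ := hy
      obtain ⟨h1, h2⟩ := hsep w hw z hz w' hw' z' hz' (by convert h using 2; push_cast; ring)
      simp only at h1 h2 ⊢
      rw [h1, h2]
    · rw [Finset.card_image_of_injOn, Finset.card_product, hWc, pow_succ]
      rintro ⟨w, z⟩ h1 ⟨w', z'⟩ h2 h
      simp only [Finset.coe_product, Set.mem_prod, Finset.mem_coe] at h1 h2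
      simp only at h
      obtain ⟨e1, e2⟩ := hsep w h1.1 z h1.2 w' h2.1 z' h2.2 (by rw [h, sub_self]; exact pid_zero S _)
      rw [e1, e2]
    · intro hcov x hx
      obtain ⟨w, hw, hxw⟩ := hWcov hcov x hx
      obtain ⟨z, hz, hxz⟩ := hcov (c⁻¹ * (x - w)) (by
        rw [mul_mem_pid_iff S (inv_ne_zero hc), val_inv S hc, hcv]; simpa using hxw)
      refine ⟨w + c * z, Finset.mem_image.2 ⟨(w, z), by simp [hw, hz], rfl⟩, ?_⟩
      have : c * (c⁻¹ * (x - w) - z) ∈ S.pid (L + M + 1) := by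
        rwa [mul_mem_pid_iff S hc, hcv, add_sub_cancel_left]
      convert this using 1
      · push_cast; ring_nf
      · field_simp; ring

/-- `μ` sees the topology: some bounded set of positive measure is null-measurable. Nothing in
the axioms guarantees this, since they only constrain the outer measure of `μ`. -/
def Good : Prop := ∃ (A : Set F) (N : ℤ), NullMeasurableSet A S.μ ∧ A ⊆ S.pid N ∧ S.μ A ≠ 0

variable {S}

/-- Disjoint translates of one measurable set of positive measure: more than `q` residue classes
would produce too many of them inside a large ball. -/
lemma Good.card_le (hG : S.Good) {Z : Finset F} (hZ : S.Sep 0 1 Z) : Z.card ≤ S.q := by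
  obtain ⟨A, N, hA, hAN, hA0⟩ := hG
  have hAfin : S.μ A ≠ ⊤ := by
    refine ne_top_of_le_ne_top ?_ (measure_mono hAN)
    have := S.mu_ball N
    change S.μ (S.pid N) = _ at this
    rw [this]; exact ENNReal.ofReal_ne_top
  have hq := q_pos S
  by_contra hlt
  push Not at hlt
  have hm : 0 < S.μ.real A := ENNReal.toReal_pos hA0 hAfin
  have key : ∀ M : ℕ, (Z.card : ℝ) ^ M * S.μ.real A ≤ (S.q : ℝ) ^ (-N) * (S.q : ℝ) ^ M := by
    intro M
    obtain ⟨W, ⟨hW1, hW2⟩, hWc, -⟩ := sep_pow S hZ (N - M) M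
    rw [sub_add_cancel] at hW2
    have hdisj : (W : Set F).Pairwise (Function.onFun (AEDisjoint S.μ) fun w => {x | x - w ∈ A}) := by
      intro w hw w' hw' hne
      refine Disjoint.aedisjoint (Set.disjoint_left.2 fun x hx hx' => hne (hW2 w hw w' hw' ?_))
      have := pid_sub S (hAN hx') (hAN hx)
      convert this using 1; ring
    have h1 := measure_biUnion_finset₀ hdisj
      (fun w _ => nullMeasurable_translate S hA hAfin w)
    simp only [mu_translate] at h1
    have h2 : S.μ (⋃ w ∈ W, {x | x - w ∈ A}) ≤ S.μ (S.pid (N - M)) := by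
      apply measure_mono
      intro x hx
      simp only [Set.mem_iUnion] at hx
      obtain ⟨w, hw, hx⟩ := hx
      have := pid_add S (pid_mono S (by omega : N - M ≤ N) (hAN hx)) (hW1 w hw)
      simpa using this
    rw [h1, Finset.sum_const, hWc, show S.μ (S.pid (N - M)) = _ from S.mu_ball _,
      ← ENNReal.ofReal_toReal hAfin, nsmul_eq_mul, ← ENNReal.ofReal_natCast,
      ← ENNReal.ofReal_mul (by positivity),
      ENNReal.ofReal_le_ofReal_iff (by positivity)] at h2
    push_cast at h2
    rw [neg_sub, sub_eq_neg_add, zpow_add₀ hq.ne', zpow_natCast] at h2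
    exact h2
  have hgt : 1 < (Z.card : ℝ) / S.q := by
    rw [one_lt_div hq]; exact_mod_cast hlt
  obtain ⟨M, hM⟩ := pow_unbounded_of_one_lt ((S.q : ℝ) ^ (-N) / S.μ.real A) hgt
  have := key M
  rw [div_pow, div_lt_div_iff₀ hm (by positivity)] at hM
  linarith

lemma Good.exists_residue_reps (hG : S.Good) :
    ∃ Z : Finset F, S.Sep 0 1 Z ∧ S.Cov 0 1 Z ∧ Z.card = S.q := by
  let P : ℕ → Prop := fun n => ∃ Z : Finset F, S.Sep 0 1 Z ∧ Z.card = n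
  have h0 : P 0 := ⟨∅, by simp [Sep], rfl⟩
  obtain ⟨Z, hZ, hZc⟩ : P (Nat.findGreatest P S.q) := Nat.findGreatest_spec (Nat.zero_le _) h0
  have hcov : S.Cov 0 1 Z := by
    intro x hx
    by_contra! hno
    have hxZ : x ∉ Z := fun h => hno x h (by simpa using pid_zero S 1)
    have hS : S.Sep 0 1 (insert x Z) := by
      refine ⟨?_, ?_⟩
      · intro z hz
        rcases Finset.mem_insert.1 hz with rfl | hz
        · exact hx
        · exact hZ.1 z hz
      · intro z hz w hw h
        rcases Finset.mem_insert.1 hz with ez | hz' <;> rcases Finset.mem_insert.1 hw with ew | hw'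
        · rw [ez, ew]
        · exact absurd (ez ▸ h) (hno w hw')
        · exact absurd (pid_sub_comm S (ew ▸ h)) (hno z hz')
        · exact hZ.2 z hz' w hw' h
    have h1 := Nat.le_findGreatest (P := P) (hG.card_le hS) ⟨_, hS, rfl⟩
    rw [Finset.card_insert_of_notMem hxZ] at h1
    omega
  refine ⟨Z, hZ, hcov, le_antisymm (hG.card_le hZ) ?_⟩
  have h1 : S.μ (S.pid 0) ≤ ∑ z ∈ Z, S.μ {x | x - z ∈ S.pid 1} := by
    refine (measure_mono ?_).trans (measure_biUnion_finset_le _ _)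
    intro x hx
    obtain ⟨z, hz, h⟩ := hcov x hx
    exact Set.mem_biUnion hz h
  have hq := q_pos S
  simp only [mu_ball', Finset.sum_const] at h1
  rw [show S.μ (S.pid 0) = _ from S.mu_ball _, nsmul_eq_mul, ← ENNReal.ofReal_natCast,
    ← ENNReal.ofReal_mul (by positivity), ENNReal.ofReal_le_ofReal_iff (by positivity)] at h1
  simp only [neg_zero, zpow_zero, zpow_neg, zpow_one] at h1
  rw [← div_eq_mul_inv, one_le_div hq] at h1
  exact_mod_cast h1

lemma Good.exists_reps (hG : S.Good) (L : ℤ) (M : ℕ) :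
    ∃ Z : Finset F, S.Sep L (L + M) Z ∧ S.Cov L (L + M) Z ∧ Z.card = S.q ^ M := by
  obtain ⟨Z, h1, h2, h3⟩ := hG.exists_residue_reps
  obtain ⟨W, h4, h5, h6⟩ := sep_pow S h1 L M
  exact ⟨W, h4, h6 h2, by rw [h5, h3]⟩

/-- With exactly `q` residue classes the outer measure is additive on the cosets of `𝔭^n` in any
larger ball, so a measurable hull of `𝔭^n` exceeds `𝔭^n` by a null set only. -/
lemma Good.nullMeasurable_pid (hG : S.Good) (n : ℤ) : NullMeasurableSet (S.pid n) S.μ := by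
  set B := S.pid n with hB
  set H := toMeasurable S.μ B
  have hBH : B ⊆ H := subset_toMeasurable S.μ B
  have hμB : S.μ B = ENNReal.ofReal ((S.q : ℝ) ^ (-n)) := S.mu_ball n
  have hH : S.μ H = S.μ B := measure_toMeasurable B
  have hq := q_pos S
  have key : ∀ M : ℕ, S.μ ((S.pid (n - M) \ B) ∩ H) = 0 := by
    intro M
    obtain ⟨Z, hZ1, hZ2, hZc⟩ := hG.exists_reps (n - M) M
    rw [sub_add_cancel] at hZ1 hZ2
    set T := S.pid (n - M) with hT
    have hBT : B ⊆ T := fun x hx => pid_mono S (by omega) hx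
    have hμT : S.μ T = ENNReal.ofReal ((S.q : ℝ) ^ (-(n - M))) := S.mu_ball _
    have hHm : NullMeasurableSet H S.μ := (measurableSet_toMeasurable S.μ B).nullMeasurableSet
    obtain ⟨z0, hz0, hz0'⟩ := hZ2 0 (pid_zero S _)
    -- all cosets except `B` itself cover `T \ B`
    have h1 : S.μ (T \ B) ≤ ∑ z ∈ Z.erase z0, S.μ {x | x - z ∈ S.pid n} := by
      refine (measure_mono ?_).trans (measure_biUnion_finset_le _ _)
      intro x hx
      obtain ⟨z, hz, h⟩ := hZ2 x hx.1
      refine Set.mem_biUnion (Finset.mem_coe.2 (Finset.mem_erase.2 ⟨?_, hz⟩)) h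
      rintro rfl
      apply hx.2
      have := pid_sub S h hz0'
      simpa using this
    simp only [mu_ball', Finset.sum_const, Finset.card_erase_of_mem hz0, hZc] at h1
    have h2 := measure_inter_add_sdiff₀ (μ := S.μ) T hHm
    have h3 := measure_inter_add_sdiff₀ (μ := S.μ) (T \ B) hHm
    have h4 : (T \ B) \ H = T \ H := by
      ext x; simp only [Set.mem_sdiff]
      exact ⟨fun h => ⟨h.1.1, h.2⟩, fun h => ⟨⟨h.1, fun hb => h.2 (hBH hb)⟩, h.2⟩⟩
    rw [h4] at h3
    have h5 : S.μ (T ∩ H) ≤ S.μ B := hH ▸ measure_mono Set.inter_subset_right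
    have h6 : S.μ T = S.μ B + (S.q ^ M - 1 : ℕ) • S.μ B := by
      rw [hμT, hμB, ← succ_nsmul', Nat.sub_add_cancel (Nat.one_le_pow _ _ (by exact_mod_cast hq)),
        nsmul_eq_mul, ← ENNReal.ofReal_natCast, ← ENNReal.ofReal_mul (by positivity)]
      congr 1
      rw [neg_sub, sub_eq_add_neg, zpow_add₀ hq.ne', zpow_natCast]; push_cast; rfl
    rw [← hμB] at h1
    have hBf : S.μ B ≠ ⊤ := by rw [hμB]; exact ENNReal.ofReal_ne_top
    have hkf : (S.q ^ M - 1 : ℕ) • S.μ B ≠ ⊤ := by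
      rw [nsmul_eq_mul]; exact ENNReal.mul_ne_top (ENNReal.natCast_ne_top _) hBf
    have h7 : (S.q ^ M - 1 : ℕ) • S.μ B ≤ S.μ (T \ H) := by
      have : S.μ B + (S.q ^ M - 1 : ℕ) • S.μ B ≤ S.μ B + S.μ (T \ H) := by
        rw [← h6, ← h2]; gcongr
      exact (ENNReal.add_le_add_iff_left hBf).1 this
    have h8 : S.μ ((T \ B) ∩ H) + S.μ (T \ H) ≤ 0 + S.μ (T \ H) := by
      rw [h3, zero_add]; exact h1.trans h7
    have hTf : S.μ (T \ H) ≠ ⊤ :=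
      ne_top_of_le_ne_top (by rw [hμT]; exact ENNReal.ofReal_ne_top) (measure_mono Set.sdiff_subset)
    exact le_antisymm ((ENNReal.add_le_add_iff_right hTf).1 h8) bot_le
  have hnull : S.μ (H \ B) = 0 := by
    refine measure_mono_null ?_ (measure_iUnion_null key)
    intro x hx
    obtain ⟨N, hN⟩ := exists_mem_pid S x
    refine Set.mem_iUnion.2 ⟨(n - N).toNat, ⟨pid_mono S (by omega) hN, hx.2⟩, hx.1⟩
  exact (measurableSet_toMeasurable S.μ B).nullMeasurableSet.congr
    ((ae_le_set.2 hnull).antisymm (LE.le.eventuallyLE hBH))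

/-- The residue field has `q` elements, so `q = 0` in it. -/
lemma Good.q_mem (hG : S.Good) : (S.q : F) ∈ S.pid 1 := by
  obtain ⟨Z, hZ, hcov, hc⟩ := hG.exists_residue_reps
  have h : ∀ z ∈ Z, ∃ w ∈ Z, z + 1 - w ∈ S.pid 1 :=
    fun z hz => hcov _ (pid_add S (hZ.1 z hz) (one_mem S))
  choose! σ hσ hσ' using h
  have hinj : Set.InjOn σ Z := by
    intro z hz w hw e
    refine hZ.2 z hz w hw ?_
    have := pid_sub S (hσ' z hz) (hσ' w hw)
    rw [e] at this
    convert this using 1; ring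
  have himg : Z.image σ = Z :=
    Finset.eq_of_subset_of_card_le (Finset.image_subset_iff.2 hσ)
      (Finset.card_image_of_injOn hinj).ge
  have hsum : ∑ z ∈ Z, σ z = ∑ z ∈ Z, z := by
    conv_rhs => rw [← himg]
    rw [Finset.sum_image hinj]
  have hmem : ∑ z ∈ Z, (z + 1 - σ z) ∈ S.pid 1 := by
    clear hsum himg hinj hc hcov
    have : ∀ W ⊆ Z, ∑ z ∈ W, (z + 1 - σ z) ∈ S.pid 1 := by
      intro W
      induction W using Finset.induction_on with
      | empty => intro _; simpa using pid_zero S 1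
      | insert a W ha ih =>
        intro hW
        rw [Finset.sum_insert ha]
        exact pid_add S (hσ' _ (hW (Finset.mem_insert_self _ _)))
          (ih fun x hx => hW (Finset.mem_insert_of_mem hx))
    exact this Z subset_rfl
  rw [Finset.sum_sub_distrib, Finset.sum_add_distrib, hsum] at hmem
  simpa [hc] using hmem

lemma Good.coprime_not_mem (hG : S.Good) {d : ℕ} (hd : Nat.Coprime d S.q) :
    (d : F) ∉ S.pid 1 := by
  intro h
  obtain ⟨u, v, huv⟩ := Nat.isCoprime_iff_coprime.2 hd
  have hint : ∀ u : ℤ, (u : F) ∈ S.pid 0 := by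
    intro u
    rcases Int.eq_nat_or_neg u with ⟨n, rfl | rfl⟩
    · simpa using nat_mem S n
    · simpa using pid_neg S (nat_mem S n)
  apply one_not_mem S
  have e : (1 : F) = u * d + v * S.q := by exact_mod_cast congrArg (Int.cast : ℤ → F) huv.symm
  rw [e]
  exact pid_add S (pid_mul' S (by norm_num) (hint u) h)
    (pid_mul' S (by norm_num) (hint v) hG.q_mem)

variable (S) in
lemma coprime_q {d : ℕ} (hd : d.Prime) (hd3 : d ≤ 3) : Nat.Coprime d S.q := by
  obtain ⟨p, f, hp, h3, hf, hq⟩ := S.residue_char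
  rw [hq]
  exact Nat.Coprime.pow_right f ((Nat.coprime_primes hd hp).2 (by omega))

lemma Good.two_ne (hG : S.Good) : (2 : F) ≠ 0 := fun h =>
  hG.coprime_not_mem (coprime_q S Nat.prime_two (by norm_num)) (by
    push_cast; rw [h]; exact pid_zero S 1)

lemma Good.three_ne (hG : S.Good) : (3 : F) ≠ 0 := fun h =>
  hG.coprime_not_mem (coprime_q S Nat.prime_three (by norm_num)) (by
    push_cast; rw [h]; exact pid_zero S 1)

lemma Good.two_mul_mem_iff (hG : S.Good) {x : F} {n : ℤ} : 2 * x ∈ S.pid n ↔ x ∈ S.pid n := by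
  have h1 := (mem_pid_iff S hG.two_ne).1 (two_mem S)
  have h2 : ¬ 1 ≤ S.val 2 := by
    rw [← mem_pid_iff S hG.two_ne]
    exact_mod_cast hG.coprime_not_mem (coprime_q S Nat.prime_two (by norm_num))
  rw [mul_mem_pid_iff S hG.two_ne, show S.val 2 = 0 by omega, sub_zero]

/-- If no bounded set of positive measure is null-measurable, every boundedly supported function
has Bochner integral `0`, because it either vanishes almost everywhere or is not measurable. -/
lemma integral_eq_zero_of_not_good (hG : ¬ S.Good) {f : F → ℂ} {N : ℤ}
    (hf : ∀ x, x ∉ S.pid N → f x = 0) : ∫ x, f x ∂S.μ = 0 := by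
  by_cases hm : AEStronglyMeasurable f S.μ
  · have h1 : NullMeasurableSet (f ⁻¹' {0}ᶜ) S.μ :=
      hm.aemeasurable.nullMeasurable (MeasurableSet.singleton 0).compl
    have h2 : S.μ (f ⁻¹' {0}ᶜ) = 0 := by
      by_contra h
      exact hG ⟨_, N, h1, fun x hx => by_contra fun h => hx (hf x h), h⟩
    apply integral_eq_zero_of_ae
    exact h2
  · exact integral_non_aestronglyMeasurable hm

/-! ### The multiplicative integral of a function of the valuation -/

variable (S) in
/-- The shell `{x : val x = j} = ϖ^j O^*`. -/
def shell (j : ℤ) : Set F := {x | x ≠ 0 ∧ S.val x = j}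

lemma shell_preimage {c : F} (hc : c ≠ 0) (j : ℤ) :
    (c * ·) ⁻¹' S.shell j = S.shell (j - S.val c) := by
  ext x
  by_cases hx : x = 0
  · simp [shell, hx]
  · simp only [shell, Set.mem_preimage, Set.mem_ofPred_eq, S.val_mul c x hc hx]
    constructor
    · rintro ⟨-, h⟩; exact ⟨hx, by omega⟩
    · rintro ⟨-, h⟩; exact ⟨mul_ne_zero hc hx, by omega⟩

lemma mus_shell (j : ℤ) : S.μs (S.shell j) = 1 := by
  obtain ⟨c, hc, hcv⟩ := exists_val S j
  rw [← S.mus_mul_invariant c hc, shell_preimage hc, hcv, sub_self]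
  exact S.mus_units

lemma nullMeasurable_shell (h : NullMeasurableSet (S.shell 0) S.μs) (j : ℤ) :
    NullMeasurableSet (S.shell j) S.μs := by
  obtain ⟨c, hc, hcv⟩ := exists_val S (-j)
  have := nullMeasurable_preimage (mulLeft_bijective₀ c hc) (S.mus_mul_invariant c hc) h
    (by rw [mus_shell]; exact ENNReal.one_ne_top)
  rw [shell_preimage hc, hcv] at this
  simpa using this

/-- A null-measurable nonempty finite union of shells forces single shells to be null-measurable:
intersect the union with its multiplicative translate that matches lowest shell with highest. -/
lemma shell_of_union {J : Finset ℤ} (hJ : J.Nonempty)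
    (h : NullMeasurableSet {x : F | x ≠ 0 ∧ S.val x ∈ J} S.μs) :
    NullMeasurableSet (S.shell 0) S.μs := by
  set A := {x : F | x ≠ 0 ∧ S.val x ∈ J} with hA
  have hfin : S.μs A ≠ ⊤ := by
    have : A ⊆ ⋃ j ∈ J, S.shell j := by
      intro x hx
      exact Set.mem_biUnion (Finset.mem_coe.2 hx.2) ⟨hx.1, rfl⟩
    refine ne_top_of_le_ne_top ?_ ((measure_mono this).trans (measure_biUnion_finset_le _ _))
    simp [mus_shell]
  set m := J.max' hJ
  set l := J.min' hJ
  obtain ⟨c, hc, hcv⟩ := exists_val S (l - m)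
  obtain ⟨d, hd, hdv⟩ := exists_val S m
  have h1 := nullMeasurable_preimage (mulLeft_bijective₀ c hc) (S.mus_mul_invariant c hc) h hfin
  have e : A ∩ (c * ·) ⁻¹' A = S.shell m := by
    ext x
    constructor
    · rintro ⟨⟨hx, hxJ⟩, -, hx2⟩
      rw [S.val_mul c x hc hx, hcv] at hx2
      have := J.min'_le _ hx2
      have := J.le_max' _ hxJ
      exact ⟨hx, by omega⟩
    · rintro ⟨hx, hxv⟩
      refine ⟨⟨hx, by rw [hxv]; exact J.max'_mem hJ⟩, mul_ne_zero hc hx, ?_⟩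
      rw [S.val_mul c x hc hx, hcv, hxv, sub_add_cancel]
      exact J.min'_mem hJ
  have h2 := h.inter h1
  rw [e] at h2
  have h3 := nullMeasurable_preimage (mulLeft_bijective₀ d hd) (S.mus_mul_invariant d hd) h2
    (by rw [mus_shell]; exact ENNReal.one_ne_top)
  rwa [shell_preimage hd, hdv, sub_self] at h3

/-- The `d*t`-integral of a finitely supported function of `val t` is the sum of its values, or
junk `0` throughout when the shells are not measurable for `μs`. -/
lemma integral_val {T : Finset ℤ} {γ : ℤ → ℂ} (hγ : ∀ j, j ∉ T → γ j = 0) {g : F → ℂ}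
    (hg0 : g 0 = 0) (hg : ∀ t, t ≠ 0 → g t = γ (S.val t)) :
    ∫ t, g t ∂S.μs = (if NullMeasurableSet (S.shell 0) S.μs then 1 else 0) * ∑ j ∈ T, γ j := by
  split_ifs with h
  · have e : g = fun t => ∑ j ∈ T, (S.shell j).indicator (fun _ => γ j) t := by
      funext t
      by_cases ht : t = 0
      · rw [ht, hg0, Finset.sum_eq_zero]
        intro j _; simp [shell]
      · rw [hg t ht]
        by_cases hT : S.val t ∈ T
        · rw [Finset.sum_eq_single_of_mem _ hT]
          · simp [shell, ht]
          · intro j _ hj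
            simp [shell, ht, hj.symm]
        · rw [hγ _ hT, Finset.sum_eq_zero]
          intro j hj
          have : S.val t ≠ j := fun e => hT (e ▸ hj)
          simp [shell, this]
    rw [e, integral_finsetSum, one_mul]
    · refine Finset.sum_congr rfl fun j _ => ?_
      rw [integral_indicator₀ (nullMeasurable_shell h j), setIntegral_const, Measure.real,
        mus_shell]
      simp
    · intro j _
      refine IntegrableOn.integrable_indicator₀ ?_ (nullMeasurable_shell h j)
      exact integrableOn_const (by rw [mus_shell]; exact ENNReal.one_ne_top)
  · rw [zero_mul]
    by_cases hm : AEStronglyMeasurable g S.μs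
    · have hγ0 : ∀ j, γ j = 0 := by
        by_contra! hne
        obtain ⟨j0, hj0⟩ := hne
        have h1 : NullMeasurableSet (g ⁻¹' {γ j0}) S.μs :=
          hm.aemeasurable.nullMeasurable (MeasurableSet.singleton _)
        apply h
        refine shell_of_union (J := T.filter fun j => γ j = γ j0) ⟨j0, ?_⟩ ?_
        · simp only [Finset.mem_filter, and_true]
          by_contra hn; exact hj0 (hγ _ hn)
        · convert h1 using 1
          ext x
          by_cases hx : x = 0
          · simp [hx, hg0, hj0.symm]
          · simp only [ne_eq, hx, not_false_eq_true, Finset.mem_filter, true_and,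
              Set.mem_ofPred_eq, Set.mem_preimage, Set.mem_singleton_iff, hg x hx]
            refine ⟨fun h => h.2, fun h => ⟨?_, h⟩⟩
            by_contra hn; exact hj0 (h ▸ hγ _ hn)
      have : g = 0 := by
        funext t
        by_cases ht : t = 0
        · rw [ht, hg0]; rfl
        · rw [hg t ht, hγ0]; rfl
      simp [this]
    · exact integral_non_aestronglyMeasurable hm

/-! ### Integration of Schwartz functions -/

variable (S) in
/-- Schwartz functions with prescribed level: supported on `𝔭^L` and invariant under `𝔭^n`. -/
def Sch (L n : ℤ) (f : F → ℂ) : Prop :=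
  (∀ x, x ∉ S.pid L → f x = 0) ∧ ∀ x h, h ∈ S.pid n → f (x + h) = f x

lemma Good.integral_balls (hG : S.Good) (n : ℤ) {ι : Type*} (s : Finset ι) (c : ι → ℂ)
    (r : ι → F) :
    Integrable (fun x => ∑ i ∈ s, if x - r i ∈ S.pid n then c i else 0) S.μ ∧
    ∫ x, (∑ i ∈ s, if x - r i ∈ S.pid n then c i else 0) ∂S.μ =
      (S.q : ℂ) ^ (-n) * ∑ i ∈ s, c i := by
  have hq := q_pos S
  have hpf : S.μ (S.pid n) ≠ ⊤ := by
    rw [show S.μ (S.pid n) = _ from S.mu_ball n]; exact ENNReal.ofReal_ne_top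
  have hN : ∀ i, NullMeasurableSet {x | x - r i ∈ S.pid n} S.μ := fun i =>
    nullMeasurable_translate S (hG.nullMeasurable_pid n) hpf (r i)
  have e : ∀ i, (fun x => if x - r i ∈ S.pid n then c i else 0) =
      {x | x - r i ∈ S.pid n}.indicator (fun _ => c i) := by
    intro i; funext x; simp [Set.indicator_apply]
  have hI : ∀ i, Integrable (fun x => if x - r i ∈ S.pid n then c i else 0) S.μ := by
    intro i
    rw [e]
    refine IntegrableOn.integrable_indicator₀ ?_ (hN i)
    exact integrableOn_const (by rw [mu_ball']; exact ENNReal.ofReal_ne_top)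
  refine ⟨integrable_finsetSum _ fun i _ => hI i, ?_⟩
  rw [integral_finsetSum _ fun i _ => hI i, Finset.mul_sum]
  refine Finset.sum_congr rfl fun i _ => ?_
  rw [e, integral_indicator₀ (hN i), setIntegral_const, Measure.real, mu_ball',
    ENNReal.toReal_ofReal (by positivity), Complex.real_smul]
  push_cast; rfl

/-- Any level `(L, L + k)` has a single finite set of nodes that integrates all Schwartz functions
of that level. -/
lemma Good.exists_nodes (hG : S.Good) (L : ℤ) (k : ℕ) : ∃ Z : Finset F,
    ∀ f, S.Sch L (L + k) f →
      (f = fun x => ∑ r ∈ Z, if x - r ∈ S.pid (L + k) then f r else 0) ∧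
      ∫ x, f x ∂S.μ = (S.q : ℂ) ^ (-(L + k)) * ∑ r ∈ Z, f r := by
  obtain ⟨Z, hZ, hcov, -⟩ := hG.exists_reps L k
  refine ⟨Z, fun f hf => ?_⟩
  have e : f = fun x => ∑ r ∈ Z, if x - r ∈ S.pid (L + k) then f r else 0 := by
    funext x
    by_cases hx : x ∈ S.pid L
    · obtain ⟨z, hz, hxz⟩ := hcov x hx
      rw [Finset.sum_eq_single_of_mem z hz, if_pos hxz]
      · have := hf.2 z (x - z) hxz
        rwa [add_sub_cancel] at this
      · intro w hw hne
        refine if_neg fun h => hne (hZ.2 w hw z hz ?_)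
        have := pid_sub S hxz h
        convert this using 1; ring
    · rw [hf.1 x hx, Finset.sum_eq_zero]
      intro z hz
      refine if_neg fun h => hx ?_
      have := pid_add S (pid_mono S (by omega : L ≤ L + k) h) (hZ.1 z hz)
      simpa using this
  refine ⟨e, ?_⟩
  rw [← (hG.integral_balls (L + k) Z f id).2]
  exact congrArg (fun g => ∫ x, g x ∂S.μ) e

lemma Sch.integrable (hG : S.Good) {L : ℤ} {k : ℕ} {f : F → ℂ} (hf : S.Sch L (L + k) f) :
    Integrable f S.μ := by
  obtain ⟨Z, hZ⟩ := hG.exists_nodes L k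
  rw [(hZ f hf).1]
  exact (hG.integral_balls (L + k) Z f id).1

lemma Sch.integral_translate (hG : S.Good) {L : ℤ} {k : ℕ} {f : F → ℂ}
    (hf : S.Sch L (L + k) f) (v : F) : ∫ x, f (x + v) ∂S.μ = ∫ x, f x ∂S.μ := by
  obtain ⟨Z, hZ⟩ := hG.exists_nodes L k
  rw [(hZ f hf).2, ← (hG.integral_balls (L + k) Z f (fun r => r - v)).2]
  congr 1; funext x
  rw [congrFun (hZ f hf).1 (x + v)]
  refine Finset.sum_congr rfl fun r _ => ?_
  rw [show x + v - r = x - (r - v) by ring]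

lemma Sch.integral_swap (hG : S.Good) {L : ℤ} {k : ℕ} {G : F → F → ℂ}
    (h1 : ∀ y, S.Sch L (L + k) fun x => G x y) (h2 : ∀ x, S.Sch L (L + k) (G x)) :
    ∫ x, (∫ y, G x y ∂S.μ) ∂S.μ = ∫ y, (∫ x, G x y ∂S.μ) ∂S.μ := by
  obtain ⟨Z, hZ⟩ := hG.exists_nodes L k
  have hx : S.Sch L (L + k) fun x => ∫ y, G x y ∂S.μ :=
    ⟨fun x hx => by simp [fun y => (h1 y).1 x hx], fun x h hh => by simp [fun y => (h1 y).2 x h hh]⟩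
  have hy : S.Sch L (L + k) fun y => ∫ x, G x y ∂S.μ :=
    ⟨fun y hy => by simp [fun x => (h2 x).1 y hy], fun y h hh => by simp [fun x => (h2 x).2 y h hh]⟩
  rw [(hZ _ hx).2, (hZ _ hy).2]
  simp only [(hZ _ (h1 _)).2, (hZ _ (h2 _)).2, ← Finset.mul_sum]
  rw [Finset.sum_comm]

lemma Sch.sum {ι : Type*} {s : Finset ι} {L n : ℤ} {f : ι → F → ℂ}
    (h : ∀ i ∈ s, S.Sch L n (f i)) : S.Sch L n fun x => ∑ i ∈ s, f i x :=
  ⟨fun x hx => Finset.sum_eq_zero fun i hi => (h i hi).1 x hx,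
    fun x v hv => Finset.sum_congr rfl fun i hi => (h i hi).2 x v hv⟩

lemma Sch.param {L n : ℤ} {G : F → F → ℂ}
    (h : ∀ y, S.Sch L n fun x => G x y) : S.Sch L n fun x => ∫ y, G x y ∂S.μ :=
  ⟨fun x hx => by simp [fun y => (h y).1 x hx], fun x v hv => by simp [fun y => (h y).2 x v hv]⟩

/-- Orthogonality: integrating `ψ(α + c z)` over the coset `z₀ + 𝔭^{-j}` detects `c ∈ 𝔭^j`. -/
lemma Good.orthogonality (hG : S.Good) {j : ℤ} (α c z0 : F) :
    ∫ z, (if z - z0 ∈ S.pid (-j) then S.ψ (α + c * z) else 0) ∂S.μ =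
      if c ∈ S.pid j then (S.q : ℂ) ^ j * S.ψ (α + c * z0) else 0 := by
  split_ifs with hc
  · have h := (hG.integral_balls (-j) {()} (fun _ => S.ψ (α + c * z0)) (fun _ => z0)).2
    simp only [Finset.sum_singleton, neg_neg] at h
    rw [← h]
    congr 1; funext z
    split_ifs with hz
    · rw [← psi_add_O S (x := α + c * z0) (pid_mul' S (by omega) hc hz)]
      congr 1; ring
    · rfl
  · obtain ⟨u, hu, huv, hψ⟩ := S.psi_nontrivial
    have hc0 : c ≠ 0 := fun h => hc (h ▸ pid_zero S j)
    rw [mem_pid_iff S hc0] at hc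
    set v := c⁻¹ * u with hv
    have hvm : v ∈ S.pid (-j) := by
      refine Or.inr ?_
      rw [hv, S.val_mul _ _ (inv_ne_zero hc0) hu, val_inv S hc0]; omega
    have hcv : c * v = u := by rw [hv]; field_simp
    set f : F → ℂ := fun z => if z - z0 ∈ S.pid (-j) then S.ψ (α + c * z) else 0 with hf
    obtain ⟨N, hN⟩ := exists_mem_pid S z0
    have hSch : S.Sch (min N (-j)) (min N (-j) + (|N| + |j| + |S.val c|).toNat) f := by
      refine ⟨fun x hx => if_neg fun h => hx ?_, fun x h hh => ?_⟩
      · have := pid_add S (pid_mono S (min_le_right N (-j)) h) (pid_mono S (min_le_left N (-j)) hN)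
        simpa using this
      · have h1 : -j ≤ min N (-j) + (|N| + |j| + |S.val c|).toNat := by
          have := neg_abs_le N; have := neg_abs_le (S.val c); have := le_abs_self j
          have := neg_abs_le j; have := le_abs_self N; have := abs_nonneg (S.val c)
          omega
        have h2 : -S.val c ≤ min N (-j) + (|N| + |j| + |S.val c|).toNat := by
          have := neg_abs_le N; have := neg_abs_le (S.val c); have := le_abs_self j
          have := neg_abs_le j; have := le_abs_self N; have := abs_nonneg (S.val c)
          omega
        have hch : c * h ∈ S.pid 0 := by
          rw [mul_mem_pid_iff S hc0]; exact pid_mono S (by omega) hh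
        simp only [hf]
        rw [show x + h - z0 = x - z0 + h by ring, pid_add_iff S (pid_mono S h1 hh),
          show α + c * (x + h) = α + c * x + c * h by ring, psi_add_O S hch]
    have h1 := hSch.integral_translate hG v
    have h2 : ∀ z, f (z + v) = S.ψ u * f z := by
      intro z
      simp only [hf]
      rw [show z + v - z0 = z - z0 + v by ring, pid_add_iff S hvm,
        show α + c * (z + v) = u + (α + c * z) by rw [← hcv]; ring, S.psi_add]
      split_ifs <;> simp
    simp only [h2, integral_const_mul] at h1
    have h3 : (S.ψ u - 1) * ∫ z, f z ∂S.μ = 0 := by rw [sub_mul, h1, one_mul, sub_self]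
    exact (mul_eq_zero.1 h3).resolve_left (sub_ne_zero.2 hψ)

/-! ### The orbital integral as an iterated integral over `F⁴` -/

variable (S) in
/-- The support condition of the orbital integrand for `val t = j`. -/
def Cond (a b : F) (j : ℤ) (z y x s : F) : Prop :=
  0 ≤ j ∧ a ∈ S.pid j ∧ b ∈ S.pid j ∧ x + a * s ∈ S.pid (-j) ∧ b * s - y ∈ S.pid (-j) ∧
    x * b + y * S.ρ ^ 2 * a ∈ S.pid j ∧
    (x * b + y * S.ρ ^ 2 * a) * s - (x * y + z * S.ρ) ∈ S.pid (-j)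

variable (S) in
/-- The phase of the orbital integrand. -/
def phase (a b z y x : F) : F :=
  x + y + 2 * a * (x * y - z) * y * S.ρ ^ 2 - 2 * b * x * z * S.ρ

variable (S) in
/-- The contribution of the shell `val t = j` to the `t`-integral. -/
def layer (a b : F) (j : ℤ) (z y x s : F) : ℂ :=
  if S.Cond a b j z y x s then (((S.q : ℝ) ^ (-j) : ℝ) : ℂ) ^ 2 * S.ψ (S.phase a b z y x) else 0

lemma inO_mul_iff {t c : F} (ht : t ≠ 0) : S.inO (t * c) ↔ c ∈ S.pid (-S.val t) := by
  change t * c ∈ S.pid 0 ↔ _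
  rw [mul_mem_pid_iff S ht, zero_sub]

lemma inO_inv_mul_iff {t c : F} (ht : t ≠ 0) : S.inO (t⁻¹ * c) ↔ c ∈ S.pid (S.val t) := by
  rw [inO_mul_iff (inv_ne_zero ht), val_inv S ht, neg_neg]

lemma Iab_eq {a b : F} (ha : a ≠ 0) {J : ℤ} (hJ : S.val a ≤ J) :
    S.Iab a b = (if NullMeasurableSet (S.shell 0) S.μs then 1 else 0) *
      ∫ z, (∫ y, (∫ x, (∫ s, (∑ j ∈ Finset.Icc 0 J, S.layer a b j z y x s)
        ∂S.μ) ∂S.μ) ∂S.μ) ∂S.μ := by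
  unfold Iab
  simp only [← integral_const_mul]
  congr 1; funext z; congr 1; funext y; congr 1; funext x; congr 1; funext s
  apply integral_val (γ := fun j => S.layer a b j z y x s)
  · intro j hj
    refine if_neg fun h => hj ?_
    rw [Finset.mem_Icc]
    exact ⟨h.1, ((mem_pid_iff S ha).1 h.2.1).trans hJ⟩
  · simp [A]
  · intro t ht
    have h0 : S.inO (0 : F) := Or.inl rfl
    have h1 : S.inO t ↔ 0 ≤ S.val t := mem_pid_iff S ht
    simp only [h0, h1, inO_mul_iff ht, inO_inv_mul_iff ht, true_and, layer, A, if_neg ht, phase]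
    refine if_congr ?_ rfl rfl
    unfold Cond
    tauto

/-- If `μ` does not see the topology, the `s`-integral already vanishes. -/
lemma Iab_eq_zero (hG : ¬ S.Good) {a b : F} (ha : a ≠ 0) : S.Iab a b = 0 := by
  rw [Iab_eq ha le_rfl]
  have h : ∀ z y x, ∫ s, (∑ j ∈ Finset.Icc 0 (S.val a), S.layer a b j z y x s) ∂S.μ = 0 := by
    intro z y x
    obtain ⟨N, hN⟩ := exists_mem_pid S x
    refine integral_eq_zero_of_not_good hG (N := min (-S.val a) N - S.val a) fun s hs => ?_
    refine Finset.sum_eq_zero fun j hj => if_neg fun hc => hs ?_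
    rw [Finset.mem_Icc] at hj
    rw [← mul_mem_pid_iff S ha]
    have h1 := pid_sub S (pid_mono S (by omega : min (-S.val a) N ≤ -j) hc.2.2.2.1)
      (pid_mono S (min_le_right _ _) hN)
    convert h1 using 1; ring
  simp [h]

lemma rho_sq_mem : S.ρ ^ 2 ∈ S.pid 0 := by
  rw [pow_two]; exact pid_mul' S (by norm_num) (rho_mem S) (rho_mem S)

/-- The support of the integrand is bounded. The bound on `s` comes from the identity
`b(x + as) - ρ²a(bs - y) - (bx + ρ²ay) = (1 - ρ²)abs`, and `1 - ρ²` is nonzero because `3` is. -/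
lemma Good.bounded (hG : S.Good) {a b : F} (ha : a ≠ 0) (hb : b ≠ 0) (J : ℤ) :
    ∃ M : ℕ, J ≤ M ∧ ∀ j ∈ Finset.Icc 0 J, ∀ z y x s, S.Cond a b j z y x s →
      z ∈ S.pid (-M) ∧ y ∈ S.pid (-M) ∧ x ∈ S.pid (-M) ∧ s ∈ S.pid (-M) := by
  have hρ : 1 - S.ρ ^ 2 ≠ 0 := by
    intro h
    apply hG.three_ne
    have h1 : S.ρ = -2 := by linear_combination S.rho_prim_cubic + h
    have := S.rho_prim_cubic
    rw [h1] at this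
    linear_combination this
  have hc : (1 - S.ρ ^ 2) * a * b ≠ 0 := mul_ne_zero (mul_ne_zero hρ ha) hb
  set E := S.val ((1 - S.ρ ^ 2) * a * b)
  set m : ℕ := (max J E).toNat
  have hmJ : J ≤ m := by omega
  have hmE : E ≤ m := by omega
  refine ⟨2 * m, by push_cast; omega, ?_⟩
  rintro j hj z y x s ⟨h0, haj, hbj, h1, h2, h3, h4⟩
  rw [Finset.mem_Icc] at hj
  have ha0 : a ∈ S.pid 0 := pid_mono S h0 haj
  have hb0 : b ∈ S.pid 0 := pid_mono S h0 hbj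
  have hs : s ∈ S.pid (-m) := by
    have h5 : (1 - S.ρ ^ 2) * a * b * s ∈ S.pid 0 := by
      have e1 : b * (x + a * s) ∈ S.pid 0 := pid_mul' S (by omega) hbj h1
      have e2 : S.ρ ^ 2 * (a * (b * s - y)) ∈ S.pid 0 :=
        pid_mul' S (by omega) rho_sq_mem (pid_mul' S (k := 0) (by omega) haj h2)
      have e3 := pid_sub S (pid_sub S e1 e2) (pid_mono S h0 h3)
      convert e3 using 1; ring
    rw [mul_mem_pid_iff S hc] at h5
    exact pid_mono S (by omega) h5
  have hx : x ∈ S.pid (-m) := by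
    have := pid_sub S (pid_mono S (by omega : (-m : ℤ) ≤ -j) h1)
      (pid_mul' S (by omega : (-m : ℤ) ≤ 0 + -m) ha0 hs)
    simpa using this
  have hy : y ∈ S.pid (-m) := by
    have := pid_sub S (pid_mul' S (by omega : (-m : ℤ) ≤ 0 + -m) hb0 hs)
      (pid_mono S (by omega : (-m : ℤ) ≤ -j) h2)
    simpa using this
  have hz : z ∈ S.pid (-(2 * m)) := by
    rw [← rho_mul_mem_iff]
    have e1 : (x * b + y * S.ρ ^ 2 * a) * s ∈ S.pid (-(2 * m)) :=
      pid_mul' S (by omega) h3 hs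
    have e2 : x * y ∈ S.pid (-(2 * m)) := pid_mul' S (by omega) hx hy
    have e3 := pid_sub S (pid_sub S e1 e2) (pid_mono S (by omega : (-(2 * m) : ℤ) ≤ -j) h4)
    convert e3 using 1; ring
  push_cast
  exact ⟨hz, pid_mono S (by omega) hy, pid_mono S (by omega) hx, pid_mono S (by omega) hs⟩

lemma sch_of {L n : ℤ} {P : F → Prop} {φ : F → F} {c : ℂ} (h1 : ∀ x, P x → x ∈ S.pid L)
    (h2 : ∀ x h, h ∈ S.pid n → P x → P (x + h) ∧ φ (x + h) - φ x ∈ S.pid 0) :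
    S.Sch L n fun x => if P x then c * S.ψ (φ x) else 0 := by
  refine ⟨fun x hx => if_neg fun h => hx (h1 x h), fun x h hh => ?_⟩
  by_cases hP : P x
  · obtain ⟨h3, h4⟩ := h2 x h hh hP
    simp only [if_pos hP, if_pos h3]
    rw [← psi_add_O S (x := φ x) h4, add_sub_cancel]
  · have hP' : ¬ P (x + h) := fun h' => hP (by
      simpa using (h2 (x + h) (-h) (pid_neg S hh) h').1)
    simp only [if_neg hP, if_neg hP']

variable (S) in
/-- A function of four variables that is Schwartz of one level in each variable separately. -/
def Sch4 (L n : ℤ) (G : F → F → F → F → ℂ) : Prop :=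
  (∀ y x s, S.Sch L n fun z => G z y x s) ∧ (∀ z x s, S.Sch L n fun y => G z y x s) ∧
    (∀ z y s, S.Sch L n fun x => G z y x s) ∧ ∀ z y x, S.Sch L n fun s => G z y x s

lemma sch4_layer {a b : F} {j : ℤ} {M : ℕ} (hjM : j ≤ M)
    (hM : ∀ z y x s, S.Cond a b j z y x s →
      z ∈ S.pid (-M) ∧ y ∈ S.pid (-M) ∧ x ∈ S.pid (-M) ∧ s ∈ S.pid (-M)) :
    S.Sch4 (-M) (2 * M) (S.layer a b j) := by
  have hρ := rho_mem S
  have hρ2 : S.ρ ^ 2 ∈ S.pid 0 := rho_sq_mem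
  have h2m := two_mem S
  refine ⟨fun y x s => sch_of (fun z h => (hM z y x s h).1) ?_,
    fun z x s => sch_of (fun y h => (hM z y x s h).2.1) ?_,
    fun z y s => sch_of (fun x h => (hM z y x s h).2.2.1) ?_,
    fun z y x => sch_of (fun s h => (hM z y x s h).2.2.2) ?_⟩
  · intro z h hh hc
    obtain ⟨hz, hy, hx, hs⟩ := hM _ _ _ _ hc
    obtain ⟨h0, haj, hbj, h1, h2, h3, h4⟩ := hc
    have ha0 : a ∈ S.pid 0 := pid_mono S h0 haj
    have hb0 : b ∈ S.pid 0 := pid_mono S h0 hbj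
    refine ⟨⟨h0, haj, hbj, h1, h2, h3, ?_⟩, ?_⟩
    · have := pid_sub S h4 (pid_mul' S (by omega : -j ≤ 2 * M + 0) hh hρ)
      convert this using 1; ring
    · have e1 : a * y * S.ρ ^ 2 ∈ S.pid (-M) :=
        pid_mul' S (by omega) (pid_mul' S (k := -M) (by omega) ha0 hy) hρ2
      have e2 : b * x * S.ρ ∈ S.pid (-M) :=
        pid_mul' S (by omega) (pid_mul' S (k := -M) (by omega) hb0 hx) hρ
      have e3 : h * (2 * (a * y * S.ρ ^ 2 + b * x * S.ρ)) ∈ S.pid 0 :=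
        pid_mul' S (by omega) hh (pid_mul' S (k := -M) (by omega) h2m (pid_add S e1 e2))
      convert pid_neg S e3 using 1; unfold phase; ring
  · intro y h hh hc
    obtain ⟨hz, hy, hx, hs⟩ := hM _ _ _ _ hc
    obtain ⟨h0, haj, hbj, h1, h2, h3, h4⟩ := hc
    have ha0 : a ∈ S.pid 0 := pid_mono S h0 haj
    have hb0 : b ∈ S.pid 0 := pid_mono S h0 hbj
    have ew : h * S.ρ ^ 2 * a ∈ S.pid (2 * M) :=
      pid_mul' S (by omega) (pid_mul' S (k := 2 * M) (by omega) hh hρ2) ha0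
    refine ⟨⟨h0, haj, hbj, h1, ?_, ?_, ?_⟩, ?_⟩
    · have := pid_sub S h2 (pid_mono S (by omega : -j ≤ 2 * M) hh)
      convert this using 1; ring
    · have := pid_add S h3 (pid_mono S (by omega : j ≤ 2 * M) ew)
      convert this using 1; ring
    · have e1 : h * S.ρ ^ 2 * a * s ∈ S.pid (-j) := pid_mul' S (by omega) ew hs
      have e2 : x * h ∈ S.pid (-j) := pid_mul' S (by omega) hx hh
      convert pid_add S h4 (pid_sub S e1 e2) using 1; ring
    · have e1 : x * y ∈ S.pid (-(2 * M)) := pid_mul' S (by omega) hx hy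
      have e2 : x * h ∈ S.pid (-(2 * M)) := pid_mul' S (by omega) hx hh
      have e3 : 2 * (x * y) + x * h - z ∈ S.pid (-(2 * M)) :=
        pid_sub S (pid_add S (pid_mul' S (by omega) h2m e1) e2) (pid_mono S (by omega) hz)
      have e4 : h * S.ρ ^ 2 * a * (2 * (x * y) + x * h - z) ∈ S.pid 0 :=
        pid_mul' S (by omega) ew e3
      have e5 := pid_add S (pid_mono S (by omega : 0 ≤ 2 * (M : ℤ)) hh)
        (pid_mul' S (by omega : (0 : ℤ) ≤ 0 + 0) h2m e4)
      convert e5 using 1; unfold phase; ring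
  · intro x h hh hc
    obtain ⟨hz, hy, hx, hs⟩ := hM _ _ _ _ hc
    obtain ⟨h0, haj, hbj, h1, h2, h3, h4⟩ := hc
    have ha0 : a ∈ S.pid 0 := pid_mono S h0 haj
    have hb0 : b ∈ S.pid 0 := pid_mono S h0 hbj
    have ew : h * b ∈ S.pid (2 * M) := pid_mul' S (by omega) hh hb0
    refine ⟨⟨h0, haj, hbj, ?_, h2, ?_, ?_⟩, ?_⟩
    · have := pid_add S h1 (pid_mono S (by omega : -j ≤ 2 * M) hh)
      convert this using 1; ring
    · have := pid_add S h3 (pid_mono S (by omega : j ≤ 2 * M) ew)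
      convert this using 1; ring
    · have e1 : h * b * s ∈ S.pid (-j) := pid_mul' S (by omega) ew hs
      have e2 : h * y ∈ S.pid (-j) := pid_mul' S (by omega) hh hy
      convert pid_add S h4 (pid_sub S e1 e2) using 1; ring
    · have e1 : a * S.ρ ^ 2 * (y * y) ∈ S.pid (-(2 * M)) :=
        pid_mul' S (by omega) (pid_mul' S (k := 0) (by omega) ha0 hρ2)
          (pid_mul' S (k := -(2 * M)) (by omega) hy hy)
      have e2 : b * S.ρ * z ∈ S.pid (-(2 * M)) :=
        pid_mul' S (by omega) (pid_mul' S (k := 0) (by omega) hb0 hρ) hz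
      have e3 : h * (2 * (a * S.ρ ^ 2 * (y * y) - b * S.ρ * z)) ∈ S.pid 0 :=
        pid_mul' S (by omega) hh
          (pid_mul' S (k := -(2 * M)) (by omega) h2m (pid_sub S e1 e2))
      have e5 := pid_add S (pid_mono S (by omega : 0 ≤ 2 * (M : ℤ)) hh) e3
      convert e5 using 1; unfold phase; ring
  · intro s h hh hc
    obtain ⟨hz, hy, hx, hs⟩ := hM _ _ _ _ hc
    obtain ⟨h0, haj, hbj, h1, h2, h3, h4⟩ := hc
    have ha0 : a ∈ S.pid 0 := pid_mono S h0 haj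
    have hb0 : b ∈ S.pid 0 := pid_mono S h0 hbj
    refine ⟨⟨h0, haj, hbj, ?_, ?_, h3, ?_⟩, by simpa using pid_zero S 0⟩
    · have := pid_add S h1 (pid_mul' S (by omega : -j ≤ 0 + 2 * M) ha0 hh)
      convert this using 1; ring
    · have := pid_add S h2 (pid_mul' S (by omega : -j ≤ 0 + 2 * M) hb0 hh)
      convert this using 1; ring
    · have := pid_add S h4 (pid_mul' S (by omega : -j ≤ j + 2 * M) h3 hh)
      convert this using 1; ring

lemma Sch4.move_inner (hG : S.Good) {L : ℤ} {k : ℕ} {G : F → F → F → F → ℂ}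
    (h : S.Sch4 L (L + k) G) :
    ∫ z, (∫ y, (∫ x, (∫ s, G z y x s ∂S.μ) ∂S.μ) ∂S.μ) ∂S.μ =
      ∫ y, (∫ x, (∫ s, (∫ z, G z y x s ∂S.μ) ∂S.μ) ∂S.μ) ∂S.μ := by
  obtain ⟨hz, hy, hx, hs⟩ := h
  rw [Sch.integral_swap hG (fun y => Sch.param fun x => Sch.param fun s => hz y x s)
    (fun z => Sch.param fun x => Sch.param fun s => hy z x s)]
  congr 1; funext y
  rw [Sch.integral_swap hG (fun x => Sch.param fun s => hz y x s)
    (fun z => Sch.param fun s => hx z y s)]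
  congr 1; funext x
  exact Sch.integral_swap hG (fun s => hz y x s) (fun z => hs z y x)

/-! ### The symmetric form of the integral -/

variable (S) in
/-- The contribution of `val t = j` after the `z`-integration. -/
def reduced (a b : F) (j : ℤ) (y x s : F) : ℂ :=
  if a ∈ S.pid j ∧ b ∈ S.pid j ∧ x + a * s ∈ S.pid (-j) ∧ b * s - y ∈ S.pid (-j) ∧
      x * b + y * S.ρ ^ 2 * a ∈ S.pid j ∧ x * b + y * S.ρ * a ∈ S.pid j
    then (((S.q : ℝ) ^ (-j) : ℝ) : ℂ) ^ 2 * ((S.q : ℂ) ^ j *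
      S.ψ (x + y + 2 * (b * x - a * y) * x * y -
        2 * (b ^ 2 * x ^ 2 - a * b * x * y + a ^ 2 * y ^ 2) * s))
    else 0

lemma Good.integral_layer (hG : S.Good) (a b : F) {j : ℤ} (hj : 0 ≤ j) (y x s : F) :
    ∫ z, S.layer a b j z y x s ∂S.μ = S.reduced a b j y x s := by
  set w := x * b + y * S.ρ ^ 2 * a with hw
  set z0 := S.ρ ^ 2 * (w * s - x * y) with hz0
  set α := x + y + 2 * a * x * y ^ 2 * S.ρ ^ 2
  set c := -(2 * (S.ρ * (x * b + y * S.ρ * a))) with hc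
  have hρ3 := rho_cube S
  have hcond : ∀ z, w * s - (x * y + z * S.ρ) ∈ S.pid (-j) ↔ z - z0 ∈ S.pid (-j) := by
    intro z
    have h : w * s - (x * y + z * S.ρ) = -(S.ρ * (z - z0)) := by
      rw [hz0]; linear_combination -(w * s - x * y) * hρ3
    rw [h, pid_neg_iff, rho_mul_mem_iff]
  have hcm : c ∈ S.pid j ↔ x * b + y * S.ρ * a ∈ S.pid j := by
    rw [hc, pid_neg_iff, hG.two_mul_mem_iff, rho_mul_mem_iff]
  have hph : ∀ z, S.phase a b z y x = α + c * z := by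
    intro z; rw [hc]; simp only [phase, α]; ring
  have hfin : α + c * z0 = x + y + 2 * (b * x - a * y) * x * y -
      2 * (b ^ 2 * x ^ 2 - a * b * x * y + a ^ 2 * y ^ 2) * s := by
    rw [hc, hz0]
    simp only [α]
    rw [hw]
    linear_combination (-2 * (x * b + y * S.ρ * a) * ((x * b + y * S.ρ ^ 2 * a) * s - x * y) -
      2 * a ^ 2 * y ^ 2 * s) * hρ3 + (2 * a * x * y ^ 2 - 2 * a * b * x * y * s) * S.rho_prim_cubic
  by_cases hP : a ∈ S.pid j ∧ b ∈ S.pid j ∧ x + a * s ∈ S.pid (-j) ∧ b * s - y ∈ S.pid (-j) ∧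
      w ∈ S.pid j
  · have e : ∀ z, S.layer a b j z y x s = (((S.q : ℝ) ^ (-j) : ℝ) : ℂ) ^ 2 *
        (if z - z0 ∈ S.pid (-j) then S.ψ (α + c * z) else 0) := by
      intro z
      rw [layer, hph, ← hcond z]
      obtain ⟨p1, p2, p3, p4, p5⟩ := hP
      simp only [Cond, p1, p2, p3, p4, hj, true_and]
      rw [← hw]
      simp only [p5, true_and]
      split_ifs <;> simp
    simp only [e, integral_const_mul, hG.orthogonality, hcm, hfin]
    obtain ⟨p1, p2, p3, p4, p5⟩ := hP
    simp only [reduced, p1, p2, p3, p4, true_and]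
    rw [← hw]
    simp only [p5, true_and]
    split_ifs <;> simp
  · have e : ∀ z, S.layer a b j z y x s = 0 := by
      intro z
      refine if_neg fun h => hP ?_
      obtain ⟨-, p1, p2, p3, p4, p5, -⟩ := h
      exact ⟨p1, p2, p3, p4, p5⟩
    rw [reduced, if_neg fun h => hP ?_]
    · simp [e]
    · obtain ⟨p1, p2, p3, p4, p5, -⟩ := h
      exact ⟨p1, p2, p3, p4, p5⟩

/-- The functional equation at the level of integrands: exchanging `x` and `y`. -/
lemma reduced_symm (a b : F) (j : ℤ) (y x s : F) :
    S.reduced (-b) (-a) j y x s = S.reduced a b j x y s := by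
  unfold reduced
  refine if_congr ?_ ?_ rfl
  · rw [pid_neg_iff, pid_neg_iff, show x + -b * s = -(b * s - x) by ring, pid_neg_iff,
      show -a * s - y = -(y + a * s) by ring, pid_neg_iff,
      show x * -a + y * S.ρ ^ 2 * -b = -(S.ρ ^ 2 * (y * b + x * S.ρ * a)) by
        linear_combination x * a * rho_cube S,
      pid_neg_iff, rho_sq_mul_mem_iff,
      show x * -a + y * S.ρ * -b = -(S.ρ * (y * b + x * S.ρ ^ 2 * a)) by
        linear_combination x * a * rho_cube S,
      pid_neg_iff, rho_mul_mem_iff]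
    tauto
  · congr 3; ring

lemma Good.Iab_reduced (hG : S.Good) {a b : F} (ha : a ≠ 0) (hb : b ≠ 0) {J : ℤ}
    (hJ : S.val a ≤ J) :
    S.Iab a b = (if NullMeasurableSet (S.shell 0) S.μs then 1 else 0) *
        ∫ y, (∫ x, (∫ s, (∑ j ∈ Finset.Icc 0 J, S.reduced a b j y x s) ∂S.μ) ∂S.μ) ∂S.μ ∧
      ∫ y, (∫ x, (∫ s, (∑ j ∈ Finset.Icc 0 J, S.reduced a b j y x s) ∂S.μ) ∂S.μ) ∂S.μ =
      ∫ x, (∫ y, (∫ s, (∑ j ∈ Finset.Icc 0 J, S.reduced a b j y x s) ∂S.μ) ∂S.μ) ∂S.μ := by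
  obtain ⟨M, hJM, hM⟩ := hG.bounded ha hb J
  have e : (2 * M : ℤ) = -M + (3 * M : ℕ) := by push_cast; ring
  have hl : ∀ j ∈ Finset.Icc 0 J, S.Sch4 (-M) (-M + (3 * M : ℕ)) (S.layer a b j) := by
    intro j hj
    rw [← e]
    exact sch4_layer ((Finset.mem_Icc.1 hj).2.trans hJM) (hM j hj)
  have hSch : S.Sch4 (-M) (-M + (3 * M : ℕ))
      fun z y x s => ∑ j ∈ Finset.Icc 0 J, S.layer a b j z y x s :=
    ⟨fun y x s => Sch.sum fun j hj => (hl j hj).1 y x s,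
      fun z x s => Sch.sum fun j hj => (hl j hj).2.1 z x s,
      fun z y s => Sch.sum fun j hj => (hl j hj).2.2.1 z y s,
      fun z y x => Sch.sum fun j hj => (hl j hj).2.2.2 z y x⟩
  have hz : ∀ y x s, ∫ z, (∑ j ∈ Finset.Icc 0 J, S.layer a b j z y x s) ∂S.μ =
      ∑ j ∈ Finset.Icc 0 J, S.reduced a b j y x s := by
    intro y x s
    rw [integral_finsetSum _ fun j hj => ((hl j hj).1 y x s).integrable hG]
    exact Finset.sum_congr rfl fun j hj =>
      hG.integral_layer a b (Finset.mem_Icc.1 hj).1 y x s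
  refine ⟨?_, ?_⟩
  · rw [Iab_eq ha hJ, hSch.move_inner hG]
    simp only [hz]
  · simp only [← hz]
    exact Sch.integral_swap hG
      (fun x => Sch.param fun s => Sch.param fun z => hSch.2.1 z x s)
      (fun y => Sch.param fun s => Sch.param fun z => hSch.2.2.1 z y s)

/-- The functional equation `I(a,b) = I(−b,−a)`. -/
theorem statement3 (a b : F) (ha : a ≠ 0) (hb : b ≠ 0) :
    S.Iab a b = S.Iab (-b) (-a) := by
  by_cases hG : S.Good
  · rw [(hG.Iab_reduced ha hb (le_max_left (S.val a) (S.val b))).1,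
      (hG.Iab_reduced (J := max (S.val a) (S.val b)) (neg_ne_zero.2 hb) (neg_ne_zero.2 ha)
        (by rw [val_neg]; exact le_max_right _ _)).1,
      (hG.Iab_reduced ha hb (le_max_left (S.val a) (S.val b))).2]
    simp only [reduced_symm]
  · rw [Iab_eq_zero hG ha, Iab_eq_zero hG (neg_ne_zero.2 hb)]

end CubicSetup
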